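/- Let G and G' be achievement positional games on disjoint vertex sets. If o(G)=o(G')=N, then o(G∪G') ≠ D; that is, it is not the case that optimal play on G∪G' leads to a draw both when Left starts and when Right starts. -/

import Mathlib

namespace APG

/-- The two players: Left and Right. -/
inductive Player : Type
  | L : Player
  | R : Player
deriving DecidableEq, Repr

/-- The opponent of a player. -/
def Player.other : Player → Player
  | .L => .R
  | .R => .L

/-- An achievement positional game: a finite vertex set together with the set of
blue edges (Left's winning sets) and the set of red edges (Right's winning sets). -/
structure Game : Type where
  V : Finset ℕ
  EL : Finset (Finset ℕ)
  ER : Finset (Finset ℕ)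

/-- The edges are nonempty subsets of the vertex set. -/
def WellFormed (G : Game) : Prop :=
  (∀ e ∈ G.EL, e ⊆ G.V ∧ e.Nonempty) ∧ (∀ e ∈ G.ER, e ⊆ G.V ∧ e.Nonempty)

/-- The winning sets of a given player. -/
def Game.edges (G : Game) : Player → Finset (Finset ℕ)
  | .L => G.EL
  | .R => G.ER

/-- The player who makes the `i`-th move (0-indexed) when `s` moves first. -/
def mover (s : Player) (i : ℕ) : Player := if i % 2 = 0 then s else s.other

/-- The set of vertices picked by player `p` along the history `h`
(the chronological list of the moves played so far), when `s` moved first. -/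
def picked (s p : Player) (h : List ℕ) : Finset ℕ :=
  ((Finset.range h.length).filter fun i => mover s i = p).image fun i => h.getD i 0

/-- The set `S` of picked vertices fills some edge of `E`. -/
def fills (E : Finset (Finset ℕ)) (S : Finset ℕ) : Prop := ∃ e ∈ E, e ⊆ S

/-- The game is over: some player has picked all the vertices of one of their edges. -/
def ended (G : Game) (s : Player) (h : List ℕ) : Prop :=
  fills G.EL (picked s .L h) ∨ fills G.ER (picked s .R h)

/-- `h` is a legal history: no vertex is picked twice, every picked vertex belongs to
the board, and no move is made after the game has ended. -/
def ValidHist (G : Game) (s : Player) (h : List ℕ) : Prop :=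
  h.Nodup ∧ (∀ x ∈ h, x ∈ G.V) ∧ ∀ k, k < h.length → ¬ ended G s (h.take k)

/-- A strategy: a map assigning to each position (history) a vertex to pick. -/
abbrev Strategy := List ℕ → ℕ

/-- Along `h`, every move of player `p` agrees with the strategy `σ`. -/
def Follows (s p : Player) (σ : Strategy) (h : List ℕ) : Prop :=
  ∀ k, k < h.length → mover s k = p → h.getD k 0 = σ (h.take k)

/-- A finished play: either the game has ended or all vertices have been picked. -/
def Complete (G : Game) (s : Player) (h : List ℕ) : Prop :=
  ended G s h ∨ h.length = G.V.card

/-- The strategy `σ` of player `p` always suggests a legal move (an unpicked vertex)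
whenever the game is not over and it is `p`'s turn. -/
def Legal (G : Game) (s p : Player) (σ : Strategy) : Prop :=
  ∀ h, ValidHist G s h → Follows s p σ h → ¬ ended G s h → h.length < G.V.card →
    mover s h.length = p → σ h ∈ G.V ∧ σ h ∉ h

/-- Player `p` has a winning strategy on `G` when `s` moves first: following it,
every finished play ends with `p` having filled one of their edges (and, the game
having ended right there, the opponent has not filled an edge first). -/
def WinsAs (G : Game) (s p : Player) : Prop :=
  ∃ σ : Strategy, Legal G s p σ ∧
    ∀ h, ValidHist G s h → Follows s p σ h → Complete G s h →
      fills (G.edges p) (picked s p h)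

/-- Player `p` has a non-losing strategy on `G` when `s` moves first: following it,
the opponent never fills one of their edges. -/
def NonLosingAs (G : Game) (s p : Player) : Prop :=
  ∃ σ : Strategy, Legal G s p σ ∧
    ∀ h, ValidHist G s h → Follows s p σ h → Complete G s h →
      ¬ fills (G.edges p.other) (picked s p.other h)

/-- The possible results of the game, for a fixed starting player. -/
inductive Result : Type
  | Lwin : Result
  | draw : Result
  | Rwin : Result
deriving DecidableEq, Repr

/-- The result of `G` with optimal play, when `s` moves first, is `r`:
a win for a player means that player has a winning strategy, a draw means
both players have non-losing strategies. -/
def resultIs (G : Game) (s : Player) : Result → Prop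
  | .Lwin => WinsAs G s .L
  | .Rwin => WinsAs G s .R
  | .draw => NonLosingAs G s .L ∧ NonLosingAs G s .R

/-- An outcome: the pair of results with optimal play
(when Left starts, when Right starts). -/
abbrev Outcome := Result × Result

/-- `G` has outcome `o`. -/
def hasOutcome (G : Game) (o : Outcome) : Prop :=
  resultIs G .L o.1 ∧ resultIs G .R o.2

/-- Numerical value of a result, from Left's point of view:
Right wins < draw < Left wins. -/
def Result.val : Result → ℕ
  | .Rwin => 0
  | .draw => 1
  | .Lwin => 2

/-- The partial order `≤_L` on outcomes, comparing both components simultaneously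
from Left's point of view. -/
def outLE (o o' : Outcome) : Prop := o.1.val ≤ o'.1.val ∧ o.2.val ≤ o'.2.val

def oL : Outcome := (.Lwin, .Lwin)
def oLminus : Outcome := (.Lwin, .draw)
def oN : Outcome := (.Lwin, .Rwin)
def oD : Outcome := (.draw, .draw)
def oRminus : Outcome := (.draw, .Rwin)
def oR : Outcome := (.Rwin, .Rwin)

/-- The updated game `G_u` after Left has picked `u`. -/
def subL (G : Game) (u : ℕ) : Game where
  V := G.V.erase u
  EL := G.EL.image fun e => e.erase u
  ER := G.ER.filter fun e => u ∉ e

/-- The updated game `G^u` after Right has picked `u`. -/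
def subR (G : Game) (u : ℕ) : Game where
  V := G.V.erase u
  EL := G.EL.filter fun e => u ∉ e
  ER := G.ER.image fun e => e.erase u

/-- The updated game `G_u^v` after Left has picked `u` and Right has picked `v`. -/
def updLR (G : Game) (u v : ℕ) : Game where
  V := (G.V.erase u).erase v
  EL := (G.EL.filter fun e => v ∉ e).image fun e => e.erase u
  ER := (G.ER.filter fun e => u ∉ e).image fun e => e.erase v

/-- The disjoint union of two games. -/
def gunion (G G' : Game) : Game where
  V := G.V ∪ G'.V
  EL := G.EL ∪ G'.EL
  ER := G.ER ∪ G'.ER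

section Positions

@[simp] theorem Player.other_other (p : Player) : p.other.other = p := by cases p <;> rfl

theorem Player.other_ne (p : Player) : p.other ≠ p := by cases p <;> decide

theorem Player.eq_other_of_ne {p q : Player} (h : q ≠ p) : q = p.other := by
  cases p <;> cases q <;> first | rfl | exact absurd rfl h

/-- The updated game after player `p` has picked `x`. -/
def play : Player → Game → ℕ → Game
  | .L => subL
  | .R => subR

@[simp] theorem play_V (p : Player) (g : Game) (x : ℕ) : (play p g x).V = g.V.erase x := by
  cases p <;> rfl

@[simp] theorem edges_play_self (p : Player) (g : Game) (x : ℕ) :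
    (play p g x).edges p = (g.edges p).image fun e => e.erase x := by
  cases p <;> rfl

@[simp] theorem edges_play_other (p : Player) (g : Game) (x : ℕ) :
    (play p g x).edges p.other = (g.edges p.other).filter fun e => x ∉ e := by
  cases p <;> rfl

@[simp] theorem edges_play_other' (p : Player) (g : Game) (x : ℕ) :
    (play p.other g x).edges p = (g.edges p).filter fun e => x ∉ e := by
  cases p <;> rfl

theorem Game.ext_edges {g h : Game} (hV : g.V = h.V) (hE : ∀ p, g.edges p = h.edges p) :
    g = h := by
  cases g; cases h
  have h1 := hE .L
  have h2 := hE .R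
  simp only [Game.edges] at h1 h2 hV
  subst h1 h2 hV
  rfl

theorem play_comm (p q : Player) (g : Game) {x y : ℕ} (hxy : x ≠ y) :
    play p (play q g x) y = play q (play p g y) x := by
  have hmem : ∀ e : Finset ℕ, (y ∈ e.erase x ↔ y ∈ e) := fun e => by simp [hxy.symm]
  have hmem' : ∀ e : Finset ℕ, (x ∈ e.erase y ↔ x ∈ e) := fun e => by simp [hxy]
  refine Game.ext_edges (by simp [Finset.erase_right_comm]) fun k => ?_
  by_cases hp : p = k <;> by_cases hq : q = k
  · subst hp; subst hq
    simp [Finset.image_image, Function.comp_def, Finset.erase_right_comm]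
  · subst hp
    obtain rfl := Player.eq_other_of_ne hq
    simp [Finset.filter_image, hmem']
  · subst hq
    obtain rfl := Player.eq_other_of_ne hp
    simp [Finset.filter_image, hmem]
  · obtain rfl := Player.eq_other_of_ne hq
    obtain rfl := Player.eq_other_of_ne hp
    simp [Finset.filter_filter, and_comm]

/-- On the family `s` of boards played simultaneously, `p` has filled an edge. -/
def Won (p : Player) (s : Multiset Game) : Prop := ∃ g ∈ s, ∅ ∈ g.edges p

/-- Player `p` can move from the family of boards `s` to `s'`. -/
def Moves (p : Player) (s s' : Multiset Game) : Prop :=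
  ∃ g r x, s = g ::ₘ r ∧ x ∈ g.V ∧ s' = play p g x ::ₘ r

variable {p q : Player} {s s' a b c m n : Multiset Game}

theorem won_add : Won p (m + n) ↔ Won p m ∨ Won p n := by
  simp only [Won, Multiset.mem_add]
  grind

theorem Won.moves_self (h : Won p s) (hm : Moves p s s') : Won p s' := by
  obtain ⟨g, r, x, rfl, hx, rfl⟩ := hm
  obtain ⟨k, hk, he⟩ := h
  rcases Multiset.mem_cons.1 hk with rfl | hk
  · exact ⟨_, Multiset.mem_cons_self _ _, by
      rw [edges_play_self]; exact Finset.mem_image.2 ⟨∅, he, by simp⟩⟩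
  · exact ⟨k, Multiset.mem_cons_of_mem hk, he⟩

theorem Won.of_moves_other (h : Won p s') (hm : Moves p.other s s') : Won p s := by
  obtain ⟨g, r, x, rfl, hx, rfl⟩ := hm
  obtain ⟨k, hk, he⟩ := h
  rcases Multiset.mem_cons.1 hk with rfl | hk
  · rw [edges_play_other'] at he
    exact ⟨_, Multiset.mem_cons_self _ _, (Finset.mem_filter.1 he).1⟩
  · exact ⟨k, Multiset.mem_cons_of_mem hk, he⟩

theorem Moves.swap (h : Moves p s a) (h' : Moves q a c) : ∃ b, Moves q s b ∧ Moves p b c := by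
  obtain ⟨g, r, x, rfl, hx, rfl⟩ := h
  obtain ⟨g', r', y, he, hy, rfl⟩ := h'
  rcases Multiset.cons_eq_cons.1 he with ⟨rfl, rfl⟩ | ⟨-, t, rfl, rfl⟩
  · simp only [play_V, Finset.mem_erase] at hy
    refine ⟨_, ⟨g, r, y, rfl, hy.2, rfl⟩, play q g y, r, x, rfl, ?_, ?_⟩
    · simp [hx, Ne.symm hy.1]
    · rw [play_comm _ _ _ (Ne.symm hy.1)]
  · exact ⟨play q g' y ::ₘ g ::ₘ t, ⟨g', g ::ₘ t, y, Multiset.cons_swap _ _ _, hy, rfl⟩,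
      g, play q g' y ::ₘ t, x, Multiset.cons_swap _ _ _, hx, Multiset.cons_swap _ _ _⟩

theorem Moves.diamond (h : Moves p s a) (h' : Moves p s b) :
    a = b ∨ ∃ c, Moves p a c ∧ Moves p b c := by
  obtain ⟨g, r, x, rfl, hx, rfl⟩ := h
  obtain ⟨g', r', y, he, hy, rfl⟩ := h'
  rcases Multiset.cons_eq_cons.1 he with ⟨rfl, rfl⟩ | ⟨-, t, rfl, rfl⟩
  · by_cases hxy : x = y
    · subst hxy; exact Or.inl rfl
    · refine Or.inr ⟨play p (play p g x) y ::ₘ r, ⟨_, _, y, rfl, ?_, rfl⟩, _, _, x, rfl, ?_, ?_⟩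
      · simp [hy, Ne.symm hxy]
      · simp [hx, hxy]
      · rw [play_comm _ _ _ hxy]
  · exact Or.inr ⟨play p g' y ::ₘ play p g x ::ₘ t,
      ⟨g', play p g x ::ₘ t, y, Multiset.cons_swap _ _ _, hy, rfl⟩,
      g, play p g' y ::ₘ t, x, Multiset.cons_swap _ _ _, hx, Multiset.cons_swap _ _ _⟩

theorem Moves.add_right (h : Moves p m s) (n : Multiset Game) : Moves p (m + n) (s + n) := by
  obtain ⟨g, r, x, rfl, hx, rfl⟩ := h
  exact ⟨g, r + n, x, Multiset.cons_add _ _ _, hx, Multiset.cons_add _ _ _⟩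

theorem Moves.add_left (h : Moves p n s) (m : Multiset Game) : Moves p (m + n) (m + s) := by
  rw [add_comm m, add_comm m]
  exact h.add_right m

theorem moves_add (h : Moves p (m + n) s) :
    (∃ m', Moves p m m' ∧ s = m' + n) ∨ ∃ n', Moves p n n' ∧ s = m + n' := by
  obtain ⟨g, r, x, he, hx, rfl⟩ := h
  have hg : g ∈ m + n := he ▸ Multiset.mem_cons_self g r
  rcases Multiset.mem_add.1 hg with hg | hg
  · obtain ⟨t, rfl⟩ := Multiset.exists_cons_of_mem hg
    rw [Multiset.cons_add, Multiset.cons_inj_right] at he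
    subst he
    exact Or.inl ⟨_, ⟨g, t, x, rfl, hx, rfl⟩, (Multiset.cons_add _ _ _).symm⟩
  · obtain ⟨t, rfl⟩ := Multiset.exists_cons_of_mem hg
    rw [Multiset.add_cons, Multiset.cons_inj_right] at he
    subst he
    exact Or.inr ⟨_, ⟨g, t, x, rfl, hx, rfl⟩, (Multiset.add_cons _ _ _).symm⟩

theorem moves_singleton {g : Game} : Moves p {g} s ↔ ∃ x ∈ g.V, s = {play p g x} := by
  constructor
  · rintro ⟨g', r, x, he, hx, rfl⟩
    obtain ⟨rfl, rfl⟩ := Multiset.singleton_eq_cons_iff r |>.1 he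
    exact ⟨x, hx, rfl⟩
  · rintro ⟨x, hx, rfl⟩
    exact ⟨g, 0, x, rfl, hx, rfl⟩

/-- The number of unpicked vertices. -/
def size (s : Multiset Game) : ℕ := (s.map fun g => g.V.card).sum

theorem size_add : size (m + n) = size m + size n := by simp [size]

theorem Moves.size_eq (h : Moves p s s') : size s = size s' + 1 := by
  obtain ⟨g, r, x, rfl, hx, rfl⟩ := h
  have := Finset.card_erase_add_one hx
  simp only [size, Multiset.map_cons, Multiset.sum_cons, play_V]
  omega

theorem exists_moves_iff : (∃ s', Moves p s s') ↔ size s ≠ 0 := by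
  constructor
  · rintro ⟨s', h⟩
    have := h.size_eq
    omega
  · intro h
    obtain ⟨k, hk, hk0⟩ : ∃ g ∈ s, g.V.card ≠ 0 := by
      by_contra! hc
      exact h (Multiset.sum_eq_zero (by simpa using hc))
    obtain ⟨r, rfl⟩ := Multiset.exists_cons_of_mem hk
    obtain ⟨x, hx⟩ := Finset.card_ne_zero.1 hk0
    exact ⟨_, k, r, x, rfl, hx, rfl⟩

/-- Player `p` wins on the family of boards `s`; the Boolean tells whether it is `p`'s turn. -/
inductive Wins (p : Player) : Bool → Multiset Game → Prop
  | won (t : Bool) (s : Multiset Game) : Won p s → Wins p t s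
  | move (s s' : Multiset Game) : ¬ Won p.other s → Moves p s s' → Wins p false s' →
      Wins p true s
  | reply (s : Multiset Game) : ¬ Won p.other s → size s ≠ 0 →
      (∀ s', Moves p.other s s' → Wins p true s') → Wins p false s

theorem Wins.not_won_other {t : Bool} (h : Wins p t s) (hw : ¬ Won p s) : ¬ Won p.other s := by
  cases h <;> first | assumption | exact absurd ‹_› hw

theorem Wins.won_of_size_eq_zero {t : Bool} (h : Wins p t s) (h0 : size s = 0) : Won p s := by
  cases h with
  | won _ _ h => exact h
  | move _ s' _ h => exact absurd h0 (exists_moves_iff.1 ⟨s', h⟩)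
  | reply _ _ h => exact absurd h0 h

theorem Wins.exists_move (h : Wins p true s) (hw : ¬ Won p s) :
    ∃ s', Moves p s s' ∧ Wins p false s' := by
  cases h with
  | won _ _ h => exact absurd h hw
  | move _ s' _ hm h => exact ⟨s', hm, h⟩

theorem Wins.of_moves (h : Wins p false s) (hw : ¬ Won p s) (hm : Moves p.other s s') :
    Wins p true s' := by
  cases h with
  | won _ _ h => exact absurd h hw
  | reply _ _ _ h => exact h s' hm

theorem exists_move_not_wins (h : ¬ Wins p false s) (hw : ¬ Won p.other s) (h0 : size s ≠ 0) :
    ∃ s', Moves p.other s s' ∧ ¬ Wins p true s' := by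
  by_contra! hc
  exact h (.reply s hw h0 hc)

theorem Wins.play_self {t : Bool} (h : Wins p t s) : ∀ {a}, Moves p s a → Wins p t a := by
  induction h with
  | won t s h => exact fun hm => .won _ _ (h.moves_self hm)
  | move s z hw hz hzw ih =>
    intro a ha
    have hwa : ¬ Won p.other a := fun h => hw (h.of_moves_other (by simpa using ha))
    rcases hz.diamond ha with rfl | ⟨c, hzc, hac⟩
    · by_cases h0 : size z = 0
      · exact .won _ _ (hzw.won_of_size_eq_zero h0)
      · obtain ⟨c, hc⟩ := exists_moves_iff (p := p).2 h0
        exact .move _ c hwa hc (ih hc)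
    · exact .move _ c hwa hac (ih hzc)
  | reply s hw h0 hr ih =>
    intro a ha
    have hwa : ¬ Won p.other a := fun h => hw (h.of_moves_other (by simpa using ha))
    by_cases ha0 : size a = 0
    · obtain ⟨y, hy⟩ := exists_moves_iff (p := p.other).2 h0
      have := hy.size_eq
      have := ha.size_eq
      exact .won _ _ ((((hr y hy).won_of_size_eq_zero (by omega)).of_moves_other hy).moves_self ha)
    · refine .reply _ hwa ha0 fun c hc => ?_
      obtain ⟨b, hb, hbc⟩ := ha.swap hc
      exact ih b hb hbc

/-- Having the turn is an advantage. -/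
theorem Wins.turn (h : Wins p false s) : Wins p true s := by
  by_cases hw : Won p s
  · exact .won _ _ hw
  by_cases h0 : size s = 0
  · exact absurd (h.won_of_size_eq_zero h0) hw
  obtain ⟨c, hc⟩ := exists_moves_iff (p := p).2 h0
  exact .move _ c (h.not_won_other hw) hc (h.play_self hc)

theorem Wins.unplay_other {t : Bool} (h : Wins p t a) :
    ∀ {s}, Moves p.other s a → Wins p t s := by
  induction h with
  | won t a h => exact fun hm => .won _ _ (h.of_moves_other hm)
  | move a c hw hm hc ih =>
    intro s hs
    obtain ⟨b, hb, hbc⟩ := hs.swap hm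
    exact .move _ b (fun h => hw (h.moves_self hs)) hb (ih hbc)
  | reply a hw h0 hr ih =>
    intro s hs
    refine .reply _ (fun h => hw (h.moves_self hs)) (exists_moves_iff.1 ⟨a, hs⟩) fun b hb => ?_
    rcases hs.diamond hb with rfl | ⟨c, hac, hbc⟩
    · exact (Wins.reply _ hw h0 hr).turn
    · exact ih c hac hbc

/-- A second player who does not lose on either of two families does not lose on their union. -/
theorem Wins.of_add_aux {t : Bool} (h : Wins p t s) : ∀ m n, s = m + n →
    (t = true → Wins p true m ∨ Wins p true n) ∧
    (t = false → Wins p false m ∨ Wins p true n) := by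
  induction h with
  | won t s h =>
    rintro m n rfl
    rcases won_add.1 h with h | h
    · exact ⟨fun _ => .inl (.won _ _ h), fun _ => .inl (.won _ _ h)⟩
    · exact ⟨fun _ => .inr (.won _ _ h), fun _ => .inr (.won _ _ h)⟩
  | move s s' hw hm h ih =>
    rintro m n rfl
    rw [won_add, not_or] at hw
    refine ⟨fun _ => ?_, by simp⟩
    rcases moves_add hm with ⟨m', hm', rfl⟩ | ⟨n', hn', rfl⟩
    · exact ((ih m' n rfl).2 rfl).imp_left (.move _ _ hw.1 hm')
    · exact ((ih n' m (add_comm _ _)).2 rfl).symm.imp_right (.move _ _ hw.2 hn')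
  | reply s hw h0 hr ih =>
    rintro m n rfl
    rw [won_add, not_or] at hw
    refine ⟨by simp, fun _ => or_iff_not_imp_right.2 fun hn => ?_⟩
    by_cases hm0 : size m = 0
    · obtain ⟨n', hn'⟩ := exists_moves_iff (p := p.other).2
        (show size n ≠ 0 by rw [size_add] at h0; omega)
      rcases (ih _ (hn'.add_left m) m n' rfl).1 rfl with h | h
      · exact .won _ _ (h.won_of_size_eq_zero hm0)
      · exact absurd (h.unplay_other hn') hn
    · exact .reply _ hw.1 hm0 fun m' hm' =>
        ((ih _ (hm'.add_right n) m' n rfl).1 rfl).resolve_right hn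

theorem Wins.of_add (h : Wins p true (m + n)) : Wins p true m ∨ Wins p true n :=
  (h.of_add_aux m n rfl).1 rfl

theorem Wins.add_aux (N : ℕ) : ∀ m n, size (m + n) = N → Wins p false m →
    (¬ Wins p.other true n → Wins p false (m + n)) ∧
    (¬ Wins p.other false n → Wins p true (m + n)) := by
  induction N using Nat.strong_induction_on with
  | _ N ih =>
    intro m n hN hm
    by_cases hpm : Won p m
    · exact ⟨fun _ => .won _ _ (won_add.2 (.inl hpm)), fun _ => .won _ _ (won_add.2 (.inl hpm))⟩
    by_cases hpn : Won p n
    · exact ⟨fun _ => .won _ _ (won_add.2 (.inr hpn)), fun _ => .won _ _ (won_add.2 (.inr hpn))⟩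
    have hm0 : size m ≠ 0 := fun h => hpm (hm.won_of_size_eq_zero h)
    have hom := hm.not_won_other hpm
    have hmn0 : size (m + n) ≠ 0 := by rw [size_add]; omega
    constructor
    · intro hn
      have hon : ¬ Won p.other n := fun h => hn (.won _ _ h)
      have ho : ¬ Won p.other (m + n) := by simp [won_add, hom, hon]
      refine .reply _ ho hmn0 fun s' hs' => ?_
      have hsize := hs'.size_eq
      rcases moves_add hs' with ⟨m', hm', rfl⟩ | ⟨n', hn', rfl⟩
      · have hpm' : ¬ Won p m' := fun h => hpm (h.of_moves_other hm')
        have hm'w := hm.of_moves hpm hm'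
        obtain ⟨m'', hm'', hw⟩ := hm'w.exists_move hpm'
        have hsize' := (hm''.add_right n).size_eq
        have hom' := hm'w.not_won_other hpm'
        exact .move _ _ (by simp [won_add, hom', hon]) (hm''.add_right n)
          ((ih _ (by omega) m'' n rfl hw).1 hn)
      · exact (ih _ (by omega) m n' rfl hm).2 fun h => hn (.move _ _ (by simpa using hpn) hn' h)
    · intro hn
      have hon : ¬ Won p.other n := fun h => hn (.won _ _ h)
      have ho : ¬ Won p.other (m + n) := by simp [won_add, hom, hon]
      by_cases hn0 : size n = 0
      · obtain ⟨m', hm'⟩ := exists_moves_iff (p := p).2 hm0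
        have hsize := (hm'.add_right n).size_eq
        exact .move _ _ ho (hm'.add_right n) ((ih _ (by omega) m' n rfl (hm.play_self hm')).1
          fun h => hon (h.won_of_size_eq_zero hn0))
      · obtain ⟨n', hn', hw⟩ := exists_move_not_wins hn (by simpa using hpn) hn0
        rw [Player.other_other] at hn'
        have hsize := (hn'.add_left m).size_eq
        exact .move _ _ ho (hn'.add_left m) ((ih _ (by omega) m n' rfl hm).1 hw)

theorem Wins.add_of_not_lost (hm : Wins p false m) (hn : ¬ Wins p.other false n) :
    Wins p true (m + n) :=
  (Wins.add_aux _ m n rfl hm).2 hn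

/-- A player who wins moving first on `m` and does not lose moving second on `n` wins moving
first on their union. -/
theorem Wins.add (hm : Wins p true m) (hn : ¬ Wins p.other true n) : Wins p true (m + n) := by
  by_cases hpm : Won p m
  · exact .won _ _ (won_add.2 (.inl hpm))
  obtain ⟨m', hm', hw⟩ := hm.exists_move hpm
  exact .move _ _ (by simpa [won_add, hm.not_won_other hpm] using fun h => hn (.won _ _ h))
    (hm'.add_right n) ((Wins.add_aux _ m' n rfl hw).1 hn)

end Positions

section Race

/-- Player `p`, moving first on the two boards `X` and `Y`, cannot win. -/
def Holds (p : Player) (X Y : Game) : Prop := ¬ Wins p true {X, Y}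

variable {p : Player} {X Y X' Y' S T : Game}

theorem Holds.trans (h : Holds p X Y) (h' : Holds p.other Y X') (h'' : Holds p X' Y') :
    Holds p X Y' := by
  intro hw
  have hsum : ({X, Y'} + {Y, X'} : Multiset Game) = {X, Y} + {X', Y'} := by
    simp only [Multiset.insert_eq_cons, ← Multiset.singleton_add]
    abel
  have := hw.add h'
  rw [hsum] at this
  exact this.of_add.elim h h''

theorem won_pair : Won p {X, Y} ↔ Won p {X} ∨ Won p {Y} := won_add (m := {X}) (n := {Y})

/-- All vertices and edges of `g` lie within `V`, and `g` has at most `n` vertices. -/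
def Within (V : Finset ℕ) (n : ℕ) (g : Game) : Prop :=
  g.V.card ≤ n ∧ g.V ⊆ V ∧ ∀ p, ∀ e ∈ g.edges p, e ⊆ V

theorem play_edge_subset {V : Finset ℕ} {g : Game} (h : ∀ p, ∀ e ∈ g.edges p, e ⊆ V)
    (q : Player) (x : ℕ) (p : Player) : ∀ e ∈ (play q g x).edges p, e ⊆ V := by
  intro e he
  by_cases hq : q = p
  · subst hq
    rw [edges_play_self, Finset.mem_image] at he
    obtain ⟨e, he, rfl⟩ := he
    exact (Finset.erase_subset _ _).trans (h _ _ he)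
  · obtain rfl := Player.eq_other_of_ne hq
    rw [edges_play_other'] at he
    exact h _ _ (Finset.mem_filter.1 he).1

theorem Within.play {V : Finset ℕ} {n : ℕ} {g : Game} (h : Within V n g) (q : Player) {x : ℕ}
    (hx : x ∈ g.V) : Within V (n - 1) (play q g x) := by
  refine ⟨?_, ?_, play_edge_subset h.2.2 q x⟩
  · rw [play_V, Finset.card_erase_of_mem hx]
    exact Nat.sub_le_sub_right h.1 1
  · rw [play_V]
    exact (Finset.erase_subset _ _).trans h.2.1

theorem Within.mono {V : Finset ℕ} {n k : ℕ} {g : Game} (h : Within V n g) (hnk : n ≤ k) :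
    Within V k g := ⟨h.1.trans hnk, h.2⟩

theorem finite_within (V : Finset ℕ) (n : ℕ) : {g | Within V n g}.Finite := by
  refine Set.Finite.subset ((V.powerset ×ˢ V.powerset.powerset ×ˢ
    V.powerset.powerset).finite_toSet.image
      fun t : Finset ℕ × Finset (Finset ℕ) × Finset (Finset ℕ) => Game.mk t.1 t.2.1 t.2.2) ?_
  rintro ⟨W, E, F⟩ ⟨-, hW, hE⟩
  refine ⟨(W, E, F), ?_, rfl⟩
  simp only [Finset.mem_coe, Finset.mem_product, Finset.mem_powerset]
  exact ⟨hW, fun e he => Finset.mem_powerset.2 (hE .L e he),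
    fun e he => Finset.mem_powerset.2 (hE .R e he)⟩

/-- Moving first on a single board, `p` can move to a board that is still won when the opponent
moves next and that satisfies `P`, and can keep doing so after each local answer. -/
inductive Guards (p : Player) (P : Game → Prop) : Game → Prop
  | intro (g : Game) (u : ℕ) : u ∈ g.V → Wins p false {play p g u} → P (play p g u) →
      (¬ Won p {play p g u} → ∀ a ∈ (play p g u).V,
        Guards p P (play p.other (play p g u) a)) → Guards p P g

theorem Guards.exists {P : Game → Prop} {g : Game} (h : Guards p P g) : ∃ S, P S := by
  cases h with
  | intro _ u _ _ hP _ => exact ⟨_, hP⟩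

theorem Guards.mono {P Q : Game → Prop} (hPQ : ∀ g, P g → Q g) {g : Game}
    (h : Guards p P g) : Guards p Q g := by
  induction h with
  | intro g u hu hw hP _ ih => exact .intro g u hu hw (hPQ _ hP) ih

theorem guards_of_wins {V : Finset ℕ} {n : ℕ} (k : ℕ) : ∀ g : Game, g.V.card = k → Within V n g →
    Wins p true {g} → ¬ Won p {g} →
    Guards p (fun S => Within V (n - 1) S ∧ Wins p false {S}) g := by
  induction k using Nat.strong_induction_on with
  | _ k ih =>
    intro g hk hg hw hn
    obtain ⟨s, hs, hsw⟩ := hw.exists_move hn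
    obtain ⟨u, hu, rfl⟩ := moves_singleton.1 hs
    refine .intro g u hu hsw ⟨hg.play p hu, hsw⟩ fun hn' a ha => ?_
    have hm : Moves p.other {play p g u} {play p.other (play p g u) a} :=
      moves_singleton.2 ⟨a, ha, rfl⟩
    refine ih _ ?_ _ rfl (((hg.play p hu).play _ ha).mono (by omega)) (hsw.of_moves hn' hm)
      fun h => hn' (h.of_moves_other hm)
    rw [play_V, Finset.card_erase_of_mem ha, play_V, Finset.card_erase_of_mem hu, ← hk]
    have := Finset.card_pos.2 ⟨u, hu⟩
    omega

/-- If `p`'s board `S` is guarded and the opponent, to move on `S` and `Y`, is not losing, then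
the opponent's board `Y` is guarded by positions that hold against positions guarding `S`. -/
theorem guards_of_not_wins {P : Game → Prop} {V : Finset ℕ} {n : ℕ} (k : ℕ) :
    ∀ S Y : Game, S.V.card + Y.V.card = k → Wins p false {S} → P S →
    (¬ Won p {S} → ∀ a ∈ S.V, Guards p P (play p.other S a)) →
    Wins p.other true {Y} → ¬ Won p.other {Y} → Within V n Y → ¬ Wins p false {S, Y} →
    Guards p.other (fun T => (Within V (n - 1) T ∧ Wins p.other false {T}) ∧
      ∃ S, P S ∧ Holds p S T) Y := by
  induction k using Nat.strong_induction_on with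
  | _ k ih =>
    intro S Y hk hS hPS hgS hY hwY hin hSY
    have hpS : ¬ Won p {S} := fun h => hSY (.won _ _ (won_pair.2 (.inl h)))
    have hS0 : size {S} ≠ 0 := fun h => hpS (hS.won_of_size_eq_zero h)
    have hoS := hS.not_won_other hpS
    obtain ⟨s', hs', hnw⟩ := exists_move_not_wins hSY (fun h => (won_pair.1 h).elim hoS hwY)
      (by rw [Multiset.insert_eq_cons, ← Multiset.singleton_add, size_add]; omega)
    rcases moves_add (m := {S}) (n := {Y}) hs' with ⟨m', hm', rfl⟩ | ⟨n', hn', rfl⟩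
    · have hwm := hS.of_moves hpS hm'
      have hom := hwm.not_won_other fun h => hpS (h.of_moves_other hm')
      obtain ⟨a, ha, rfl⟩ := moves_singleton.1 hm'
      cases hgS hpS a ha with
      | intro _ u hu hw hP hg =>
        have hmu : Moves p {play p.other S a} {play p (play p.other S a) u} :=
          moves_singleton.2 ⟨u, hu, rfl⟩
        refine ih _ ?_ _ Y rfl hw hP hg hY hwY hin fun h => hnw ?_
        · rw [play_V, Finset.card_erase_of_mem hu, play_V, Finset.card_erase_of_mem ha]
          have := Finset.card_pos.2 ⟨a, ha⟩
          omega
        · exact .move _ _ (fun h => (won_pair.1 h).elim hom hwY) (hmu.add_right {Y}) h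
    · obtain ⟨v, hv, rfl⟩ := moves_singleton.1 hn'
      set T := play p.other Y v with hT
      have hTw : Wins p.other false {T} := by
        by_contra hc
        exact hnw (hS.add_of_not_lost hc)
      refine .intro Y v hv hTw ⟨⟨hin.play _ hv, hTw⟩, S, hPS, hnw⟩ fun hwT b hb => ?_
      rw [← hT] at hwT hb ⊢
      rw [Player.other_other]
      have hmb : Moves p {T} {play p T b} := moves_singleton.2 ⟨b, hb, rfl⟩
      have hmb' : Moves p.other.other {T} {play p T b} := by simpa using hmb
      refine ih _ ?_ S _ rfl hS hPS hgS (hTw.of_moves hwT hmb')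
        (fun h => hwT (h.of_moves_other hmb')) (((hin.play _ hv).play _ hb).mono (by omega))
        fun h => hnw ?_
      · rw [play_V, Finset.card_erase_of_mem hb, hT, play_V, Finset.card_erase_of_mem hv]
        have := Finset.card_pos.2 ⟨v, hv⟩
        omega
      · exact .move _ _ (fun h => (won_pair.1 h).elim hoS hwT) (hmb.add_left {S}) h

theorem Guards.transfer {P : Game → Prop} {V : Finset ℕ} {n : ℕ} (hX : Guards p P X)
    (hY : Wins p.other true {Y}) (hin : Within V n Y) (hXY : Holds p X Y)
    (hYX : Holds p.other Y X) :
    Guards p.other (fun T => (Within V (n - 1) T ∧ Wins p.other false {T}) ∧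
      ∃ S, P S ∧ Holds p S T) Y := by
  have hw : ¬ Won p.other {Y} ∧ ¬ Won p.other {X} :=
    not_or.1 fun h => hYX (.won _ _ (won_pair.2 h))
  cases hX with
  | intro _ u hu hS hP hg =>
    have hm : Moves p {X} {play p X u} := moves_singleton.2 ⟨u, hu, rfl⟩
    exact guards_of_not_wins _ _ Y rfl hS hP hg hY hw.1 hin fun h => hXY
      (.move _ _ (fun h => (won_pair.1 h).elim hw.2 hw.1) (hm.add_right {Y}) h)

/-- If each player wins moving first on his own board, then some player moving first wins on
both boards together. -/
theorem not_holds_holds (p : Player) (V : Finset ℕ) (k : ℕ) : ∀ A B : Game,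
    A.V.card + B.V.card = k → Within V A.V.card A → Within V B.V.card B →
    Wins p true {A} → Wins p.other true {B} → Holds p A B → ¬ Holds p.other B A := by
  induction k using Nat.strong_induction_on with
  | _ k ih =>
    intro A B hk hVA hVB hA hB hAB hBA
    have hwA : ¬ Won p {A} := fun h => hAB (.won _ _ (won_pair.2 (.inl h)))
    have hA0 : 0 < A.V.card := by
      obtain ⟨s, hs, -⟩ := hA.exists_move hwA
      obtain ⟨u, hu, -⟩ := moves_singleton.1 hs
      exact Finset.card_pos.2 ⟨u, hu⟩
    let val : Game → Set Game := fun S =>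
      {T | (Within V (B.V.card - 1) T ∧ Wins p.other false {T}) ∧ Holds p.other T S}
    have hfin : {T | Within V (B.V.card - 1) T}.Finite := finite_within V _
    have hval : ∀ S, val S ⊆ {T | Within V (B.V.card - 1) T} := fun S T hT => hT.1.1
    have hguard : ∀ j : ℕ, Guards p (fun S => (Within V (A.V.card - 1) S ∧ Wins p false {S}) ∧
        j ≤ (val S).ncard) A := by
      intro j
      induction j with
      | zero => exact (guards_of_wins _ A rfl hVA hA hwA).mono fun S hS => ⟨hS, Nat.zero_le _⟩
      | succ j ihj =>
        have h := (ihj.transfer hB hVB hAB hBA).transfer (Y := A) (by simpa using hA) hVA hBA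
          (by simpa using hAB)
        simp only [Player.other_other] at h
        refine h.mono ?_
        rintro S' ⟨hS', T, ⟨hT, S, ⟨hS, hj⟩, hST⟩, hTS'⟩
        refine ⟨hS', hj.trans_lt (Set.ncard_lt_ncard ⟨?_, fun hsub => ?_⟩
          (hfin.subset (hval S')))⟩
        · exact fun T' hT' => ⟨hT'.1, hT'.2.trans (by simpa using hST) hTS'⟩
        · refine ih _ ?_ S T rfl ⟨le_rfl, hS.1.2⟩ ⟨le_rfl, hT.1.2⟩ hS.2.turn hT.2.turn hST
            (hsub ⟨hT, hTS'⟩ : T ∈ val S).2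
          have := hS.1.1
          have := hT.1.1
          omega
    obtain ⟨S, -, hS⟩ := (hguard ({T | Within V (B.V.card - 1) T}.ncard + 1)).exists
    have := Set.ncard_le_ncard (hval S) hfin
    omega

end Race

section Strategies

variable {G : Game} {s p : Player} {h : List ℕ} {x : ℕ} {σ : Strategy}

/-- The updated game once each player `q` has picked the vertices of `f q`. -/
def position (G : Game) (f : Player → Finset ℕ) : Game where
  V := G.V \ (f .L ∪ f .R)
  EL := (G.EL.filter fun e => Disjoint e (f .R)).image fun e => e \ f .L
  ER := (G.ER.filter fun e => Disjoint e (f .L)).image fun e => e \ f .R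

theorem edges_position (G : Game) (f : Player → Finset ℕ) (p : Player) :
    (position G f).edges p =
      ((G.edges p).filter fun e => Disjoint e (f p.other)).image fun e => e \ f p := by
  cases p <;> rfl

theorem play_position (f : Player → Finset ℕ) (p : Player)
    (hx : x ∈ (position G f).V) :
    play p (position G f) x = position G (Function.update f p (insert x (f p))) := by
  have hx' : x ∉ f p.other := by
    simp only [position, Finset.mem_sdiff, Finset.mem_union, not_or] at hx
    cases p <;> simp [Player.other, hx]
  refine Game.ext_edges ?_ fun q => ?_
  · ext y
    cases p <;> simp [position] <;> tauto
  · by_cases hq : q = p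
    · subst hq
      simp [edges_position, Finset.image_image, Function.comp_def, Finset.sdiff_insert,
        Function.update_of_ne (Player.other_ne q)]
    · obtain rfl := Player.eq_other_of_ne hq
      rw [edges_play_other, edges_position, edges_position, Finset.filter_image,
        Finset.filter_filter]
      simp only [Player.other_other, Function.update_self,
        Function.update_of_ne (Player.other_ne p), Finset.disjoint_insert_right,
        Finset.mem_sdiff, hx', not_false_eq_true, and_true]
      simp only [and_comm]

theorem mem_picked : x ∈ picked s p h ↔ ∃ i < h.length, mover s i = p ∧ h.getD i 0 = x := by
  simp [picked, and_assoc]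

theorem picked_append : picked s p (h ++ [x]) =
    if mover s h.length = p then insert x (picked s p h) else picked s p h := by
  have hget : ∀ i < h.length, (h ++ [x]).getD i 0 = h.getD i 0 := fun i hi =>
    List.getD_append _ _ _ _ hi
  have hlast : (h ++ [x]).getD h.length 0 = x := by simp
  ext y
  simp only [mem_picked, List.length_append, List.length_singleton, Nat.lt_succ_iff_lt_or_eq]
  split_ifs with hm
  · rw [Finset.mem_insert, mem_picked]
    constructor
    · rintro ⟨i, hi | rfl, hmi, hy⟩
      · exact .inr ⟨i, hi, hmi, hget i hi ▸ hy⟩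
      · exact .inl (hy.symm.trans hlast)
    · rintro (rfl | ⟨i, hi, hmi, hy⟩)
      · exact ⟨_, .inr rfl, hm, hlast⟩
      · exact ⟨i, .inl hi, hmi, (hget i hi).trans hy⟩
  · rw [mem_picked]
    constructor
    · rintro ⟨i, hi | rfl, hmi, hy⟩
      · exact ⟨i, hi, hmi, hget i hi ▸ hy⟩
      · exact absurd hmi hm
    · rintro ⟨i, hi, hmi, hy⟩
      exact ⟨i, .inl hi, hmi, (hget i hi).trans hy⟩

theorem mem_picked_or : x ∈ picked s .L h ∨ x ∈ picked s .R h ↔ x ∈ h := by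
  simp only [mem_picked, List.mem_iff_getElem]
  constructor
  · rintro (⟨i, hi, -, rfl⟩ | ⟨i, hi, -, rfl⟩) <;> exact ⟨i, hi, by simp [hi]⟩
  · rintro ⟨i, hi, rfl⟩
    rcases hm : mover s i with _ | _
    · exact .inl ⟨i, hi, hm, by simp [hi]⟩
    · exact .inr ⟨i, hi, hm, by simp [hi]⟩

theorem disjoint_picked (hn : h.Nodup) : Disjoint (picked s p h) (picked s p.other h) := by
  rw [Finset.disjoint_left]
  intro x hx hx'
  obtain ⟨i, hi, hmi, rfl⟩ := mem_picked.1 hx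
  obtain ⟨j, hj, hmj, hij⟩ := mem_picked.1 hx'
  rw [List.getD_eq_getElem _ _ hi, List.getD_eq_getElem _ _ hj] at hij
  obtain rfl := (hn.getElem_inj_iff).1 hij
  exact Player.other_ne p (hmj.symm.trans hmi)

/-- The updated game after the moves of the history `h`. -/
def current (G : Game) (s : Player) (h : List ℕ) : Game := position G fun q => picked s q h

theorem mem_current : x ∈ (current G s h).V ↔ x ∈ G.V ∧ x ∉ h := by
  rw [← mem_picked_or (s := s)]
  simp [current, position]

theorem current_append (hx : x ∈ (current G s h).V) :
    current G s (h ++ [x]) = play (mover s h.length) (current G s h) x := by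
  rw [current, current, play_position _ _ hx]
  congr 1
  funext q
  rw [picked_append]
  split_ifs with hq
  · subst hq; simp
  · rw [Function.update_of_ne (Ne.symm hq)]

theorem won_current (hn : h.Nodup) :
    Won p {current G s h} ↔ fills (G.edges p) (picked s p h) := by
  simp only [Won, Multiset.mem_singleton, exists_eq_left, current, edges_position,
    Finset.mem_image, Finset.mem_filter, Finset.sdiff_eq_empty_iff_subset, fills]
  exact ⟨fun ⟨e, he, hs⟩ => ⟨e, he.1, hs⟩,
    fun ⟨e, he, hs⟩ => ⟨e, ⟨he, (disjoint_picked hn).mono_left hs⟩, hs⟩⟩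

theorem ended_iff (hn : h.Nodup) (p : Player) :
    ended G s h ↔ Won p {current G s h} ∨ Won p.other {current G s h} := by
  rw [won_current hn, won_current hn, ended]
  cases p
  · rfl
  · exact or_comm

theorem mover_succ (s : Player) (i : ℕ) : mover s (i + 1) = (mover s i).other := by
  unfold mover
  rcases Nat.mod_two_eq_zero_or_one i with hi | hi
  · rw [if_neg (by omega : ¬ (i + 1) % 2 = 0), if_pos hi]
  · rw [if_pos (by omega : (i + 1) % 2 = 0), if_neg (by omega : ¬ i % 2 = 0), Player.other_other]

theorem ValidHist.append (hv : ValidHist G s h) (he : ¬ ended G s h)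
    (hx : x ∈ (current G s h).V) : ValidHist G s (h ++ [x]) := by
  obtain ⟨hxV, hxh⟩ := mem_current.1 hx
  refine ⟨?_, ?_, fun k hk => ?_⟩
  · rw [← List.concat_eq_append, List.nodup_concat]
    exact ⟨hxh, hv.1⟩
  · intro y hy
    rcases List.mem_append.1 hy with hy | hy
    · exact hv.2.1 y hy
    · exact List.mem_singleton.1 hy ▸ hxV
  · rw [List.length_append, List.length_singleton] at hk
    rw [List.take_append_of_le_length (by omega)]
    rcases Nat.lt_succ_iff_lt_or_eq.1 hk with hk | rfl
    · exact hv.2.2 k hk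
    · rwa [List.take_length]

theorem Follows.append (hf : Follows s p σ h) (hx : mover s h.length = p → x = σ h) :
    Follows s p σ (h ++ [x]) := by
  intro k hk hm
  rw [List.length_append, List.length_singleton] at hk
  rw [List.take_append_of_le_length (by omega)]
  rcases Nat.lt_succ_iff_lt_or_eq.1 hk with hk | rfl
  · rw [List.getD_append _ _ _ _ hk]
    exact hf k hk hm
  · rw [List.take_length, ← hx hm]
    simp

theorem card_current (hv : ValidHist G s h) :
    (current G s h).V.card + h.length = G.V.card := by
  have hV : (current G s h).V = G.V \ h.toFinset := by
    ext x
    simp [mem_current]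
  have hsub : h.toFinset ⊆ G.V := fun x hx => hv.2.1 x (List.mem_toFinset.1 hx)
  rw [hV, ← List.toFinset_card_of_nodup hv.1, Finset.card_sdiff_add_card_eq_card hsub]

theorem size_singleton (g : Game) : size {g} = g.V.card := by simp [size]

/-- The turn of `p` after the history `h`. -/
def turnOf (s p : Player) (h : List ℕ) : Bool := decide (mover s h.length = p)

theorem turnOf_append_self (hm : mover s h.length = p) : turnOf s p (h ++ [x]) = false := by
  subst hm
  simp [turnOf, mover_succ, Player.other_ne]

theorem turnOf_append_other (hm : mover s h.length ≠ p) : turnOf s p (h ++ [x]) = true := by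
  simp [turnOf, mover_succ, Player.eq_other_of_ne hm]

theorem wins_current (hl : Legal G s p σ)
    (hσ : ∀ h, ValidHist G s h → Follows s p σ h → Complete G s h →
      fills (G.edges p) (picked s p h)) (k : ℕ) :
    ∀ h, (current G s h).V.card = k → ValidHist G s h → Follows s p σ h →
      Wins p (turnOf s p h) {current G s h} := by
  induction k with
  | zero =>
    intro h hk hv hf
    have := card_current hv
    exact .won _ _ ((won_current hv.1).2 (hσ h hv hf (.inr (by omega))))
  | succ k ih =>
    intro h hk hv hf
    have hcard := card_current hv
    by_cases he : ended G s h
    · exact .won _ _ ((won_current hv.1).2 (hσ h hv hf (.inl he)))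
    obtain ⟨hwp, hwo⟩ := not_or.1 fun h' => he ((ended_iff hv.1 p).2 h')
    have hnext : ∀ x (hx : x ∈ (current G s h).V), (mover s h.length = p → x = σ h) →
        Wins p (turnOf s p (h ++ [x])) {play (mover s h.length) (current G s h) x} := by
      intro x hx hxσ
      rw [← current_append hx]
      refine ih _ ?_ (hv.append he hx) (hf.append hxσ)
      rw [current_append hx, play_V, Finset.card_erase_of_mem hx, hk, Nat.add_sub_cancel]
    by_cases hm : mover s h.length = p
    · have hx := (mem_current (s := s)).2 (hl h hv hf he (by omega) hm)
      have h1 := hnext _ hx fun _ => rfl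
      rw [turnOf_append_self hm, hm] at h1
      rw [turnOf, decide_eq_true hm]
      exact .move _ _ hwo (moves_singleton.2 ⟨_, hx, rfl⟩) h1
    · rw [turnOf, decide_eq_false hm]
      refine .reply _ hwo (by rw [size_singleton]; omega) fun s' hs' => ?_
      obtain ⟨x, hx, rfl⟩ := moves_singleton.1 hs'
      have h1 := hnext x hx fun h' => absurd h' hm
      rwa [turnOf_append_other hm, Player.eq_other_of_ne hm] at h1

theorem not_wins_current (hl : Legal G s p σ)
    (hσ : ∀ h, ValidHist G s h → Follows s p σ h → Complete G s h →
      ¬ fills (G.edges p.other) (picked s p.other h)) (k : ℕ) :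
    ∀ h, (current G s h).V.card = k → ValidHist G s h → Follows s p σ h →
      ¬ Wins p.other (turnOf s p.other h) {current G s h} := by
  induction k with
  | zero =>
    intro h hk hv hf hw
    have := card_current hv
    exact hσ h hv hf (.inr (by omega))
      ((won_current hv.1).1 (hw.won_of_size_eq_zero (by rw [size_singleton, hk])))
  | succ k ih =>
    intro h hk hv hf hw
    have hcard := card_current hv
    have hwo : ¬ Won p.other {current G s h} := fun h' =>
      hσ h hv hf (.inl ((ended_iff hv.1 p).2 (.inr h'))) ((won_current hv.1).1 h')
    have hwp : ¬ Won p {current G s h} := by simpa using hw.not_won_other hwo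
    have he : ¬ ended G s h := fun h' => ((ended_iff hv.1 p).1 h').elim hwp hwo
    have hnext : ∀ x (hx : x ∈ (current G s h).V), (mover s h.length = p → x = σ h) →
        ¬ Wins p.other (turnOf s p.other (h ++ [x]))
          {play (mover s h.length) (current G s h) x} := by
      intro x hx hxσ
      rw [← current_append hx]
      refine ih _ ?_ (hv.append he hx) (hf.append hxσ)
      rw [current_append hx, play_V, Finset.card_erase_of_mem hx, hk, Nat.add_sub_cancel]
    by_cases hm : mover s h.length = p
    · have hmo : mover s h.length ≠ p.other := fun h' => Player.other_ne p (h'.symm.trans hm)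
      have hx := (mem_current (s := s)).2 (hl h hv hf he (by omega) hm)
      have h1 := hnext _ hx fun _ => rfl
      rw [turnOf_append_other hmo, hm] at h1
      rw [turnOf, decide_eq_false hmo] at hw
      exact h1 (hw.of_moves hwo (moves_singleton.2 ⟨_, hx, by rw [Player.other_other]⟩))
    · have hmo := Player.eq_other_of_ne hm
      rw [turnOf, decide_eq_true hmo] at hw
      obtain ⟨s', hs', h2⟩ := hw.exists_move hwo
      obtain ⟨x, hx, rfl⟩ := moves_singleton.1 hs'
      have h1 := hnext x hx fun h' => absurd h' hm
      rw [turnOf_append_self hmo, hmo] at h1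
      exact h1 h2

theorem current_nil (G : Game) (s : Player) : current G s [] = G := by
  refine Game.ext_edges (by ext; simp [mem_current]) fun p => ?_
  simp [current, edges_position, picked]

theorem validHist_nil (G : Game) (s : Player) : ValidHist G s [] :=
  ⟨List.nodup_nil, by simp, by simp⟩

theorem WinsAs.wins (h : WinsAs G p p) : Wins p true {G} := by
  obtain ⟨σ, hl, hσ⟩ := h
  simpa [current_nil, turnOf, mover] using
    wins_current hl hσ _ [] rfl (validHist_nil G p) fun k hk => by simp at hk

theorem NonLosingAs.not_wins (h : NonLosingAs G p.other p) : ¬ Wins p.other true {G} := by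
  obtain ⟨σ, hl, hσ⟩ := h
  simpa [current_nil, turnOf, mover] using
    not_wins_current hl hσ _ [] rfl (validHist_nil G p.other) fun k hk => by simp at hk

end Strategies

section Union

variable {p : Player} {G G' : Game}

theorem edges_gunion (p : Player) (G G' : Game) :
    (gunion G G').edges p = G.edges p ∪ G'.edges p := by
  cases p <;> rfl

theorem gunion_comm (G G' : Game) : gunion G G' = gunion G' G := by
  simp [gunion, Finset.union_comm]

theorem play_gunion (hG' : ∀ q, ∀ e ∈ G'.edges q, e ⊆ G'.V) (p : Player) {x : ℕ}
    (hx : x ∉ G'.V) : play p (gunion G G') x = gunion (play p G x) G' := by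
  have hxe : ∀ q, ∀ e ∈ G'.edges q, x ∉ e := fun q e he h => hx (hG' q e he h)
  refine Game.ext_edges ?_ fun q => ?_
  · simp only [play_V, gunion, Finset.erase_union_distrib, Finset.erase_eq_of_notMem hx]
  · by_cases hq : q = p
    · subst hq
      simp only [edges_play_self, edges_gunion, Finset.image_union]
      congr 1
      conv_rhs => rw [← Finset.image_id (s := G'.edges q)]
      exact Finset.image_congr fun e he => Finset.erase_eq_of_notMem (hxe q e he)
    · obtain rfl := Player.eq_other_of_ne hq
      simp only [edges_play_other, edges_gunion, Finset.filter_union]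
      rw [Finset.filter_true_of_mem (s := G'.edges p.other) (hxe _)]

theorem play_edges_subset_V (hG : ∀ q, ∀ e ∈ G.edges q, e ⊆ G.V) (p : Player) (x : ℕ) :
    ∀ q, ∀ e ∈ (play p G x).edges q, e ⊆ (play p G x).V := by
  intro q e he
  rw [play_V]
  by_cases hq : q = p
  · subst hq
    rw [edges_play_self, Finset.mem_image] at he
    obtain ⟨e, he, rfl⟩ := he
    exact Finset.erase_subset_erase _ (hG _ _ he)
  · obtain rfl := Player.eq_other_of_ne hq
    rw [edges_play_other, Finset.mem_filter] at he
    exact Finset.subset_erase.2 ⟨hG _ _ he.1, he.2⟩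

theorem Wins.gunion {t : Bool} {s : Multiset Game} (h : Wins p t s) : ∀ G G' : Game,
    s = {G, G'} → (∀ q, ∀ e ∈ G.edges q, e ⊆ G.V) → (∀ q, ∀ e ∈ G'.edges q, e ⊆ G'.V) →
    Disjoint G.V G'.V → Wins p t {gunion G G'} := by
  have hwon : ∀ (q : Player) (G G' : Game), Won q {APG.gunion G G'} ↔ Won q {G, G'} := by
    intro q G G'
    rw [won_pair]
    simp [Won, edges_gunion]
  induction h with
  | won t s h =>
    rintro G G' rfl - - -
    exact .won _ _ ((hwon _ _ _).2 h)
  | move s s' hw hm _ ih =>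
    rintro G G' rfl hG hG' hd
    rcases moves_add (m := {G}) (n := {G'}) hm with ⟨m', hm', rfl⟩ | ⟨n', hn', rfl⟩
    · obtain ⟨x, hx, rfl⟩ := moves_singleton.1 hm'
      refine .move _ _ (by rwa [hwon]) (moves_singleton.2
        ⟨x, Finset.mem_union_left _ hx, (congrArg _ (play_gunion hG' p
          (Finset.disjoint_left.1 hd hx))).symm⟩) (ih _ _ rfl (play_edges_subset_V hG p x) hG' ?_)
      rw [play_V]
      exact hd.mono_left (Finset.erase_subset _ _)
    · obtain ⟨x, hx, rfl⟩ := moves_singleton.1 hn'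
      rw [gunion_comm]
      refine .move _ _ (by rwa [gunion_comm, hwon]) (moves_singleton.2
        ⟨x, Finset.mem_union_left _ hx, (congrArg _ (play_gunion hG p
          (Finset.disjoint_right.1 hd hx))).symm⟩) (ih _ _ (Multiset.pair_comm _ _)
          (play_edges_subset_V hG' p x) hG ?_)
      rw [play_V]
      exact hd.symm.mono_left (Finset.erase_subset _ _)
  | reply s hw h0 _ ih =>
    rintro G G' rfl hG hG' hd
    refine .reply _ (by rwa [hwon]) ?_ fun s' hs' => ?_
    · rw [size_singleton]
      have : ({G, G'} : Multiset Game) = {G} + {G'} := rfl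
      rw [this, size_add, size_singleton, size_singleton] at h0
      rwa [APG.gunion, Finset.card_union_of_disjoint hd]
    · obtain ⟨x, hx, rfl⟩ := moves_singleton.1 hs'
      rcases Finset.mem_union.1 hx with hx | hx
      · rw [play_gunion hG' _ (Finset.disjoint_left.1 hd hx)]
        refine ih {play p.other G x, G'} (Moves.add_right (moves_singleton.2 ⟨x, hx, rfl⟩) {G'})
          _ _ rfl (play_edges_subset_V hG _ x) hG' ?_
        rw [play_V]
        exact hd.mono_left (Finset.erase_subset _ _)
      · rw [gunion_comm, play_gunion hG _ (Finset.disjoint_right.1 hd hx)]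
        refine ih {G, play p.other G' x} (Moves.add_left (moves_singleton.2 ⟨x, hx, rfl⟩) {G})
          _ _ (Multiset.pair_comm _ _) (play_edges_subset_V hG' _ x) hG ?_
        rw [play_V]
        exact hd.symm.mono_left (Finset.erase_subset _ _)

theorem WellFormed.edges_subset (h : WellFormed G) : ∀ q, ∀ e ∈ G.edges q, e ⊆ G.V
  | .L => fun e he => (h.1 e he).1
  | .R => fun e he => (h.2 e he).1

end Union

/-- If `o(G) = o(G') = N`, then `o(G ∪ G') ≠ D`. -/
theorem union_N_N_not_draw (G G' : Game) (hG : WellFormed G) (hG' : WellFormed G')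
    (hdisj : Disjoint G.V G'.V)
    (hGo : hasOutcome G oN) (hG'o : hasOutcome G' oN) :
    ¬ hasOutcome (gunion G G') oD := by
  intro hD
  have hE := hG.edges_subset
  have hE' := hG'.edges_subset
  refine not_holds_holds .L (G.V ∪ G'.V) _ G G' rfl
    ⟨le_rfl, Finset.subset_union_left, fun q e he => (hE q e he).trans Finset.subset_union_left⟩
    ⟨le_rfl, Finset.subset_union_right,
      fun q e he => (hE' q e he).trans Finset.subset_union_right⟩
    (WinsAs.wins hGo.1) (WinsAs.wins hG'o.2) (fun h => ?_) fun h => ?_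
  · exact NonLosingAs.not_wins (p := .R) hD.1.2 (h.gunion G G' rfl hE hE' hdisj)
  · exact NonLosingAs.not_wins (p := .L) hD.2.1
      (h.gunion G G' (Multiset.pair_comm _ _) hE hE' hdisj)
end APG
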